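/- arXiv:1206.3916 — 3 statements merged into one kernel-verified Lean document; each statement's English description precedes it below -/
import Mathlib

section
/- Let FS_1 be the free shelf on one generator x. Let VB_2^+ be the monoid presented by generators σ, ζ and the single relation ζ² = 1, and let ρ be the monoid homomorphism from VB_2^+ to self-maps of FS_1 × FS_1 determined by ρ(σ)(a,b) = (b, a◁b) and ρ(ζ)(a,b) = (b,a). Then ρ is injective. -/
/-- The self-distributivity relation on a free magma. -/
def sdRel (α : Type*) : FreeMagma α → FreeMagma α → Prop := fun a b =>
  ∃ t u v : FreeMagma α, a = t * u * v ∧ b = (t * v) * (u * v)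

/-- The free shelf on `α`. -/
abbrev FreeShelf (α : Type*) := (conGen (sdRel α)).Quotient

/-- The defining relation of `VB_2^+`: generators `σ = false`, `ζ = true`, relation
`ζ² = 1`. -/
def vb2Rels : FreeMonoid Bool → FreeMonoid Bool → Prop := fun a b =>
  a = FreeMonoid.of true * FreeMonoid.of true ∧ b = 1

/-!
Put `A = ζσ` and `B = σζ`. As `ζA = Bζ`, every element of `VB_2^+` is `w` or `wζ` for a word `w` in
`A`, `B`. On pairs, `A (a, b) = (a ◁ b, b)` and `B (a, b) = (a, b ◁ a)`, so a ping-pong argument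
recovers `w` from the image of `(x, x)` in any right cancellative magma in which `x` is not a
product and `c ◁ (a ◁ b) = b` has no solution; the pair `(x, x ◁ x)` then detects the factor `ζ`.

It remains to map the free shelf to a shelf of this kind. Dehornoy's shifted conjugation
`a · sh b · s · (sh a)⁻¹` makes the permutations of `X^ℕ` into a shelf, where `X` is a rack, `sh f`
applies `f` behind the first entry, and `s` is the Yang–Baxter map of `X` on the first two entries.
There `c ◁ (a ◁ b) = b` forces an identity `s · sh c · s = sh d`. The second entry of the left hand
side at `(x, y, …)` is `x ◃ y`, while that of the right hand side does not depend on `x`, so this is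
impossible as soon as the elements of `X` do not all act in the same way.
-/

open Function
open scoped Quandles

theorem injective_lift_apply_of_injective2 {ι X : Type*} {f : ι → Function.End X}
    (hf : Injective2 f) {x : X} (hx : ∀ i y, f i y ≠ x) :
    Injective fun w ↦ FreeMonoid.lift f w x := by
  have lift_of_mul (i : ι) (w : FreeMonoid ι) :
      FreeMonoid.lift f (FreeMonoid.of i * w) x = f i (FreeMonoid.lift f w x) := by
    rw [map_mul, FreeMonoid.lift_eval_of]
    rfl
  intro v w h
  beta_reduce at h
  induction v using FreeMonoid.inductionOn' generalizing w with
  | one =>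
    cases w using FreeMonoid.casesOn with
    | one => rfl
    | of_mul j w => exact absurd (h.trans (lift_of_mul j w)).symm (hx j _)
  | of_mul i v ih =>
    cases w using FreeMonoid.casesOn with
    | one => exact absurd ((lift_of_mul i v).symm.trans h) (hx i _)
    | of_mul j w =>
      rw [lift_of_mul, lift_of_mul] at h
      obtain ⟨rfl, hvw⟩ := hf h
      rw [ih hvw]

namespace VirtualBraid

/-- The positive virtual braid monoid `VB_2^+` on two strands. -/
abbrev VB₂ := PresentedMonoid vb2Rels

/-- The classical crossing, a generator of `VB_2^+`. -/
abbrev σ : VB₂ := PresentedMonoid.of vb2Rels false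

/-- The virtual crossing, an involutive generator of `VB_2^+`. -/
abbrev ζ : VB₂ := PresentedMonoid.of vb2Rels true

theorem ζ_mul_ζ : ζ * ζ = 1 :=
  PresentedMonoid.mk_eq_mk_of_rel (rels := vb2Rels) ⟨rfl, rfl⟩

theorem mul_ζ_mul_ζ (m : VB₂) : m * ζ * ζ = m := by
  rw [mul_assoc, ζ_mul_ζ, mul_one]

theorem induction_mul_right {motive : VB₂ → Prop} (m : VB₂) (one : motive 1)
    (mul_σ : ∀ m, motive m → motive (m * σ)) (mul_ζ : ∀ m, motive m → motive (m * ζ)) :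
    motive m := by
  have hm : m ∈ Submonoid.closure (Set.range (PresentedMonoid.of vb2Rels)) := by
    rw [PresentedMonoid.closure_range_of]
    exact Submonoid.mem_top m
  induction hm using Submonoid.closure_induction_right with
  | one => exact one
  | mul_right m _ _ hg ih =>
    obtain ⟨_ | _, rfl⟩ := hg
    · exact mul_σ m ih
    · exact mul_ζ m ih

/-- The generators `B = σζ` (for `false`) and `A = ζσ` (for `true`) of the submonoid of pure
virtual braids, those whose underlying permutation is trivial. -/
def pureGen (c : Bool) : VB₂ := bif c then ζ * σ else σ * ζ

/-- The pure virtual braid spelled by a word in the generators `pureGen`. -/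
def pureWord : FreeMonoid Bool →* VB₂ := FreeMonoid.lift pureGen

theorem exists_eq_pureWord_or_eq_pureWord_mul_ζ (m : VB₂) :
    ∃ w, m = pureWord w ∨ m = pureWord w * ζ := by
  induction m using induction_mul_right with
  | one => exact ⟨1, .inl (map_one pureWord).symm⟩
  | mul_σ m ih =>
    obtain ⟨w, rfl | rfl⟩ := ih
    · exact ⟨w * FreeMonoid.of false, .inr <| by
        simp only [map_mul, pureWord, FreeMonoid.lift_eval_of, pureGen, cond_false,
          mul_assoc, ζ_mul_ζ, mul_one]⟩
    · exact ⟨w * FreeMonoid.of true, .inl <| by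
        simp only [map_mul, pureWord, FreeMonoid.lift_eval_of, pureGen, cond_true, mul_assoc]⟩
  | mul_ζ m ih =>
    obtain ⟨w, rfl | rfl⟩ := ih
    · exact ⟨w, .inr rfl⟩
    · exact ⟨w, .inl (mul_ζ_mul_ζ _)⟩

section Action

variable (M : Type*) [Mul M]

/-- The action `ρ` of `VB_2^+` on pairs of elements of a magma: `σ (a, b) = (b, a * b)` and
`ζ (a, b) = (b, a)`. No law is imposed on the product of the magma. -/
def action : VB₂ →* Function.End (M × M) :=
  PresentedMonoid.lift (M := Function.End (M × M))
    (fun c ↦ bif c then Prod.swap else fun p ↦ (p.2, p.1 * p.2)) <| by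
      rintro _ _ ⟨rfl, rfl⟩
      rw [map_mul, map_one, FreeMonoid.lift_eval_of]
      rfl

variable {M}

theorem action_mul_apply (m n : VB₂) (p : M × M) :
    action M (m * n) p = action M m (action M n p) := by
  rw [map_mul]
  rfl

theorem action_σ_apply (p : M × M) : action M σ p = (p.2, p.1 * p.2) := rfl

theorem action_ζ_apply (p : M × M) : action M ζ p = p.swap := rfl

theorem action_pureGen_true_apply (p : M × M) :
    action M (pureGen true) p = (p.1 * p.2, p.2) := rfl

theorem action_pureGen_false_apply (p : M × M) :
    action M (pureGen false) p = (p.1, p.2 * p.1) := rfl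

theorem action_map {N : Type*} [Mul N] (f : M →ₙ* N) (m : VB₂) (p : M × M) :
    action N m (p.map f f) = (action M m p).map f f := by
  induction m using induction_mul_right generalizing p with
  | one => simp only [map_one, Function.End.one_def, id_eq]
  | mul_σ m ih =>
    rw [action_mul_apply, action_mul_apply, ← ih]
    simp only [action_σ_apply, Prod.map, map_mul]
  | mul_ζ m ih => rw [action_mul_apply, action_mul_apply, ← ih]; rfl

theorem action_injective [IsRightCancelMul M] (m : VB₂) : Injective (action M m) := by
  induction m using induction_mul_right with
  | one => exact injective_id
  | mul_σ m ih =>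
    rw [map_mul]
    refine ih.comp fun p q h ↦ ?_
    obtain ⟨h₂, h₁⟩ := Prod.mk.inj h
    rw [h₂] at h₁
    exact Prod.ext (mul_right_cancel h₁) h₂
  | mul_ζ m ih =>
    rw [map_mul]
    exact ih.comp Prod.swap_injective

theorem action_pureGen_injective2 [IsRightCancelMul M] (hM : ∀ a b c : M, c * (a * b) ≠ b) :
    Injective2 fun c ↦ action M (pureGen c) := by
  have disjoint_ranges (p q : M × M) :
      action M (pureGen true) p ≠ action M (pureGen false) q := by
    rw [action_pureGen_true_apply, action_pureGen_false_apply]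
    intro h
    obtain ⟨h₁, h₂⟩ := Prod.mk.inj h
    exact hM p.1 p.2 q.2 (by rw [h₁, ← h₂])
  intro c d p q h
  cases c <;> cases d
  · exact ⟨rfl, action_injective _ h⟩
  · exact absurd h.symm (disjoint_ranges q p)
  · exact absurd h (disjoint_ranges p q)
  · exact ⟨rfl, action_injective _ h⟩

theorem action_pureWord_apply_injective [IsRightCancelMul M]
    (hM : ∀ a b c : M, c * (a * b) ≠ b) {x : M} (hx : ∀ a b, a * b ≠ x) :
    Injective fun w ↦ action M (pureWord w) (x, x) := by
  simp only [pureWord, FreeMonoid.hom_map_lift]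
  refine injective_lift_apply_of_injective2 (action_pureGen_injective2 hM) fun c p h ↦ ?_
  cases c
  · exact hx _ _ (congrArg Prod.snd h)
  · exact hx _ _ (congrArg Prod.fst h)

theorem eq_of_action_apply_eq [IsRightCancelMul M] (hM : ∀ a b c : M, c * (a * b) ≠ b) {x : M}
    (hx : ∀ a b, a * b ≠ x) {m n : VB₂} (h : action M m (x, x) = action M n (x, x))
    (h' : action M m (x, x * x) = action M n (x, x * x)) : m = n := by
  have action_mul_ζ_ne (k : VB₂) : action M (k * ζ) (x, x * x) ≠ action M k (x, x * x) := by
    rw [action_mul_apply, action_ζ_apply]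
    exact fun hk ↦ hx x x (congrArg Prod.fst (action_injective k hk))
  have action_mul_ζ_diag (k : VB₂) : action M (k * ζ) (x, x) = action M k (x, x) := by
    rw [action_mul_apply, action_ζ_apply, Prod.swap_prod_mk]
  obtain ⟨v, hm⟩ := exists_eq_pureWord_or_eq_pureWord_mul_ζ m
  obtain ⟨w, hn⟩ := exists_eq_pureWord_or_eq_pureWord_mul_ζ n
  obtain rfl : v = w := action_pureWord_apply_injective hM hx <| by
    rcases hm with rfl | rfl <;> rcases hn with rfl | rfl <;>
      simpa only [action_mul_ζ_diag] using h
  rcases hm with rfl | rfl <;> rcases hn with rfl | rfl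
  · rfl
  · exact absurd h'.symm (action_mul_ζ_ne _)
  · exact absurd h' (action_mul_ζ_ne _)
  · rfl

end Action

end VirtualBraid

/-- The universal property of the free shelf: a map to a magma satisfying the shelf law extends to
the free shelf. -/
def freeShelfLift {α S : Type*} [Mul S] (hS : ∀ a b c : S, a * b * c = a * c * (b * c))
    (f : α → S) : FreeShelf α →ₙ* S where
  toFun q := q.liftOn (FreeMagma.lift f) <| by
    suffices conGen (sdRel α) ≤ Con.ker (FreeMagma.lift f) from fun _ _ h ↦ this h
    refine Con.conGen_le.2 ?_
    rintro _ _ ⟨t, u, v, rfl, rfl⟩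
    simpa only [Con.ker_rel, map_mul] using hS _ _ _
  map_mul' q r := by
    induction q, r using Con.induction_on₂ with
    | _ a b => exact map_mul (FreeMagma.lift f) a b

section ShiftedConj

variable {G : Type*} [Group G] (φ : G →* G) (s : G)

/-- Dehornoy's shifted conjugation on a group with an endomorphism `φ` in the role of the shift of
the infinite braid group, and an element `s` in the role of its first generator. -/
def shiftedConj (a b : G) : G := a * φ b * s * (φ a)⁻¹

variable {φ s}

theorem shiftedConj_self_distrib (hs : ∀ g, Commute s (φ (φ g)))
    (braid : s * φ s * s = φ s * s * φ s) (a b c : G) :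
    shiftedConj φ s a (shiftedConj φ s b c) =
      shiftedConj φ s (shiftedConj φ s a b) (shiftedConj φ s a c) := by
  have hb : (φ (φ b))⁻¹ * s = s * (φ (φ b))⁻¹ := (hs b).symm.inv_left.eq
  have ha : (φ (φ a))⁻¹ * s * φ (φ a) = s := (hs a).symm.inv_mul_cancel
  have hbraid : φ s * s = s * φ s * s * (φ s)⁻¹ := by rw [braid, mul_inv_cancel_right]
  simp only [shiftedConj, map_mul, map_inv, mul_inv_rev, inv_inv]
  calc
    _ = a * φ b * φ (φ c) * φ s * ((φ (φ b))⁻¹ * s) * (φ a)⁻¹ := by group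
    _ = a * φ b * φ (φ c) * (φ s * s) * (φ (φ b))⁻¹ * (φ a)⁻¹ := by rw [hb]; group
    _ = a * φ b * (φ (φ c) * s) * φ s * s * (φ s)⁻¹ * (φ (φ b))⁻¹ * (φ a)⁻¹ := by
      rw [hbraid]; group
    _ = a * φ b * (s * φ (φ c)) * φ s * ((φ (φ a))⁻¹ * s * φ (φ a)) * (φ s)⁻¹ *
        (φ (φ b))⁻¹ * (φ a)⁻¹ := by rw [ha, (hs c).eq]
    _ = _ := by group

theorem shiftedConj_right_injective (hφ : Injective φ) (a : G) :
    Injective (shiftedConj φ s a) := fun _ _ h ↦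
  hφ (mul_left_cancel (mul_right_cancel (mul_right_cancel h)))

theorem shiftedConj_shiftedConj_ne (h : ∀ c d, s * φ c * s ≠ φ d) (a b c : G) :
    shiftedConj φ s (shiftedConj φ s b a) c ≠ b := by
  intro hb
  set u := shiftedConj φ s b a with hu
  have hbu : u * φ c * s = b * φ u := mul_inv_eq_iff_eq_mul.1 hb
  refine h (b⁻¹ * c) (a⁻¹ * u) ?_
  calc
    s * φ (b⁻¹ * c) * s = (φ a)⁻¹ * b⁻¹ * (u * φ c * s) := by
      rw [hu, shiftedConj, map_mul, map_inv]
      group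
    _ = φ (a⁻¹ * u) := by
      rw [hbu, map_mul, map_inv]
      group

end ShiftedConj

section Streams

open scoped Stream'

variable {X : Type*}

/-- The shift endomorphism of the permutations of `X^ℕ`: apply a permutation to the entries after
the first one. -/
def permShift : Equiv.Perm (Stream' X) →* Equiv.Perm (Stream' X) where
  toFun g :=
    { toFun v := v.head :: g v.tail
      invFun v := v.head :: g.symm v.tail
      left_inv v := by simp
      right_inv v := by simp }
  map_one' := Equiv.ext Stream'.eta
  map_mul' _ _ := rfl

theorem permShift_cons (g : Equiv.Perm (Stream' X)) (x : X) (v : Stream' X) :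
    permShift g (x :: v) = x :: g v := rfl

theorem permShift_injective : Injective (permShift (X := X)) := fun g h hgh ↦ by
  ext1 v
  have hv := DFunLike.congr_fun hgh (v.head :: v)
  rw [permShift_cons, permShift_cons] at hv
  exact Stream'.cons_injective_right _ hv

theorem perm_stream_ext {g h : Equiv.Perm (Stream' X)}
    (H : ∀ x y z v, g (x :: y :: z :: v) = h (x :: y :: z :: v)) : g = h := by
  ext1 v
  simpa only [Stream'.eta] using H v.head v.tail.head v.tail.tail.head v.tail.tail.tail

variable [Rack X]

variable (X) in
/-- The Yang–Baxter map `(x, y) ↦ (x ◃ y, x)` of a rack, acting on the first two entries of a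
sequence. -/
def crossing : Equiv.Perm (Stream' X) where
  toFun v := (v.head ◃ v.tail.head) :: v.head :: v.tail.tail
  invFun v := v.tail.head :: (v.tail.head ◃⁻¹ v.head) :: v.tail.tail
  left_inv v := by
    simp only [Stream'.head_cons, Stream'.tail_cons, Rack.invAct_act_eq, Stream'.eta]
  right_inv v := by
    simp only [Stream'.head_cons, Stream'.tail_cons, Rack.act_invAct_eq, Stream'.eta]

theorem crossing_cons_cons (x y : X) (v : Stream' X) :
    crossing X (x :: y :: v) = (x ◃ y) :: x :: v := rfl

theorem commute_crossing_permShift_permShift (g : Equiv.Perm (Stream' X)) :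
    Commute (crossing X) (permShift (permShift g)) := rfl

theorem crossing_braid :
    crossing X * permShift (crossing X) * crossing X =
      permShift (crossing X) * crossing X * permShift (crossing X) := by
  refine perm_stream_ext fun x y z v ↦ ?_
  simp only [Equiv.Perm.mul_apply, crossing_cons_cons, permShift_cons]
  rw [← Shelf.self_distrib]

theorem crossing_mul_permShift_mul_crossing_ne {x x' y : X} (h : x ◃ y ≠ x' ◃ y)
    (c d : Equiv.Perm (Stream' X)) : crossing X * permShift c * crossing X ≠ permShift d := by
  intro hcd
  have act_eq (z : X) : z ◃ y = (d (y :: Stream'.const y)).head :=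
    congrArg (·.tail.head) (DFunLike.congr_fun hcd (z :: y :: Stream'.const y))
  exact h ((act_eq x).trans (act_eq x').symm)

end Streams

/-- The shelf in which elements of the free shelf are compared: shifted conjugation on the
permutations of `X^ℕ`, with its arguments exchanged because `Mul` is to be right distributive. The
second component counts the left factors of a product; it ensures that not everything is a
product. -/
def BraidShelf (X : Type*) := Equiv.Perm (Stream' X) × ℕ

namespace BraidShelf

variable {X : Type*} [Rack X]

instance : Mul (BraidShelf X) :=
  ⟨fun a b ↦ (shiftedConj permShift (crossing X) b.1 a.1, a.2 + 1)⟩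

theorem mul_right_distrib (a b c : BraidShelf X) : a * b * c = a * c * (b * c) :=
  Prod.ext
    (shiftedConj_self_distrib commute_crossing_permShift_permShift crossing_braid c.1 b.1 a.1) rfl

instance : IsRightCancelMul (BraidShelf X) where
  mul_right_cancel c _ _ h := Prod.ext
    (shiftedConj_right_injective permShift_injective c.1 (congrArg Prod.fst h))
    (Nat.succ_injective (congrArg Prod.snd h))

theorem mul_mul_ne {x x' y : X} (h : x ◃ y ≠ x' ◃ y) (a b c : BraidShelf X) :
    c * (a * b) ≠ b := fun hb ↦
  shiftedConj_shiftedConj_ne (crossing_mul_permShift_mul_crossing_ne h) a.1 b.1 c.1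
    (congrArg Prod.fst hb)

theorem mul_ne_mk_zero (g : Equiv.Perm (Stream' X)) (a b : BraidShelf X) : a * b ≠ (g, 0) :=
  fun h ↦ Nat.succ_ne_zero _ (congrArg Prod.snd h)

end BraidShelf

namespace VirtualBraid

theorem action_freeShelf_injective (α : Type*) [Nonempty α] :
    Injective (action (FreeShelf α)) := by
  intro m n hmn
  let x : BraidShelf (Quandle.Dihedral 3) := (1, 0)
  let f : FreeShelf α →ₙ* BraidShelf (Quandle.Dihedral 3) :=
    freeShelfLift BraidShelf.mul_right_distrib fun _ ↦ x
  let g : FreeShelf α := (FreeMagma.of (Classical.arbitrary α) : FreeMagma α)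
  have action_eq (p : FreeShelf α × FreeShelf α) :
      action _ m (p.map f f) = action _ n (p.map f f) := by
    rw [action_map, action_map, hmn]
  have dihedral_act_ne : Quandle.dihedralAct 3 0 0 ≠ Quandle.dihedralAct 3 1 0 := by decide
  exact eq_of_action_apply_eq (BraidShelf.mul_mul_ne dihedral_act_ne)
    (BraidShelf.mul_ne_mk_zero 1) (action_eq (g, g)) (action_eq (g, g * g))

end VirtualBraid

theorem stmt11_general (α : Type*) [Nonempty α] :
    ∃ ρ : PresentedMonoid vb2Rels →* Function.End (FreeShelf α × FreeShelf α),
      ρ (PresentedMonoid.of vb2Rels false) = (fun p => (p.2, p.1 * p.2)) ∧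
      ρ (PresentedMonoid.of vb2Rels true) = Prod.swap ∧
      Function.Injective ρ :=
  ⟨VirtualBraid.action _, rfl, rfl, VirtualBraid.action_freeShelf_injective α⟩

/-- The monoid homomorphism `ρ : VB_2^+ → End(FS_1 × FS_1)` determined
by `ρ(σ)(a,b) = (b, a ◁ b)` and `ρ(ζ)(a,b) = (b,a)` is injective. -/
theorem stmt11 :
    ∃ ρ : PresentedMonoid vb2Rels →* Function.End (FreeShelf Unit × FreeShelf Unit),
      ρ (PresentedMonoid.of vb2Rels false) = (fun p => (p.2, p.1 * p.2)) ∧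
      ρ (PresentedMonoid.of vb2Rels true) = Prod.swap ∧
      Function.Injective ρ :=
  stmt11_general Unit
end

section
/- Let R be a commutative ring and H a Hopf algebra over R with multiplication μ, comultiplication Δ, antipode S, which is cocommutative (τ ∘ Δ = Δ, where τ : H ⊗ H → H ⊗ H is the flip x ⊗ y ↦ y ⊗ x) and whose antipode is bijective. Let σ : H ⊗_R H → H ⊗_R H be the R-linear map given in Sweedler notation by σ(x ⊗ y) = y₍₁₎ ⊗ S(y₍₂₎) · x · y₍₃₎, i.e. the composite σ = (id_H ⊗ (μ ∘ (μ ⊗ id_H))) ∘ (id_H ⊗ S ⊗ id_H ⊗ id_H) ∘ P ∘ (id_H ⊗ ((Δ ⊗ id_H) ∘ Δ)), where P is the linear permutation x ⊗ y₁ ⊗ y₂ ⊗ y₃ ↦ y₁ ⊗ y₂ ⊗ x ⊗ y₃. Then σ satisfies the Yang–Baxter equation (σ ⊗ id) ∘ (id ⊗ σ) ∘ (σ ⊗ id) = (id ⊗ σ) ∘ (σ ⊗ id) ∘ (id ⊗ σ) on H ⊗ H ⊗ H, and σ is a linear automorphism of H ⊗ H. -/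
open TensorProduct

/-!
For a cocommutative coalgebra `C`, the coalgebra maps `C → H` into a cocommutative Hopf algebra
form a group under convolution, and they pair to coalgebra maps `C → H ⊗ H`: a cocommutative Hopf
algebra is a group object in the category of cocommutative coalgebras, where `⊗` is the product.
On `C`-valued points the map `σ` is `(f, g) ↦ (g, g⁻¹ f g)`. By Yoneda, it therefore suffices that
this map is bijective and satisfies the Yang–Baxter equation for every group. The inverse is
`(f, g) ↦ (f g f⁻¹, f)`, and both sides of the Yang–Baxter equation send `(f, g, h)` to
`(h, h⁻¹ g h, (g h)⁻¹ f (g h))`.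
-/

namespace CocommHopf

open Coalgebra (comul counit IsCocomm comulCoalgHom counitCoalgHom)
open HopfAlgebra (antipode)
open WithConv (toConv)

section Pairing

variable {R A B C D E : Type*} [CommSemiring R]
  [AddCommMonoid A] [Module R A] [Coalgebra R A] [AddCommMonoid B] [Module R B] [Coalgebra R B]
  [AddCommMonoid C] [Module R C] [Coalgebra R C] [IsCocomm R C]
  [AddCommMonoid D] [Module R D] [Coalgebra R D] [AddCommMonoid E] [Module R E] [Coalgebra R E]

/-- The pairing `(f ⊗ g) ∘ Δ` of two coalgebra maps, which is a coalgebra map because its source is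
cocommutative. It exhibits `A ⊗ B` as the product of `A` and `B` among cocommutative coalgebras. -/
noncomputable def pair (f : C →ₗc[R] A) (g : C →ₗc[R] B) : C →ₗc[R] A ⊗[R] B :=
  (Coalgebra.TensorProduct.map f g).comp (comulCoalgHom R C)

variable (R A B) in
/-- The first projection `a ⊗ b ↦ ε(b) a` of the product of coalgebras `A ⊗ B`. -/
noncomputable def fst : A ⊗[R] B →ₗc[R] A :=
  (Coalgebra.TensorProduct.rid R R A : A ⊗[R] R →ₗc[R] A).comp
    (Coalgebra.TensorProduct.map (.id R A) (counitCoalgHom R B))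

variable (R A B) in
/-- The second projection `a ⊗ b ↦ ε(a) b` of the product of coalgebras `A ⊗ B`. -/
noncomputable def snd : A ⊗[R] B →ₗc[R] B :=
  (Coalgebra.TensorProduct.lid R B : R ⊗[R] B →ₗc[R] B).comp
    (Coalgebra.TensorProduct.map (counitCoalgHom R A) (.id R B))

@[simp] lemma fst_tmul (a : A) (b : B) : fst R A B (a ⊗ₜ b) = counit (R := R) b • a := rfl

@[simp] lemma snd_tmul (a : A) (b : B) : snd R A B (a ⊗ₜ b) = counit (R := R) a • b := rfl

lemma pair_toLinearMap (f : C →ₗc[R] A) (g : C →ₗc[R] B) :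
    (pair f g : C →ₗ[R] A ⊗[R] B) = TensorProduct.map f.toLinearMap g.toLinearMap ∘ₗ comul := rfl

lemma pair_comp [IsCocomm R D] (f : C →ₗc[R] A) (g : C →ₗc[R] B) (k : D →ₗc[R] C) :
    (pair f g).comp k = pair (f.comp k) (g.comp k) := by
  apply CoalgHom.coe_linearMap_injective
  simp only [CoalgHom.comp_toLinearMap, pair_toLinearMap, CoalgHom.toLinearMap_eq_coe,
    LinearMap.comp_assoc, ← CoalgHomClass.map_comp_comul, TensorProduct.map_comp]

lemma map_comp_pair (k : A →ₗc[R] D) (l : B →ₗc[R] E) (f : C →ₗc[R] A) (g : C →ₗc[R] B) :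
    (Coalgebra.TensorProduct.map k l).comp (pair f g) = pair (k.comp f) (l.comp g) := by
  apply CoalgHom.coe_linearMap_injective
  simp [pair_toLinearMap, coassoc_simps]

lemma assoc_comp_pair_pair (f : C →ₗc[R] A) (g : C →ₗc[R] B) (h : C →ₗc[R] D) :
    (Coalgebra.TensorProduct.assoc R R A B D : (A ⊗[R] B) ⊗[R] D →ₗc[R] A ⊗[R] (B ⊗[R] D)).comp
      (pair (pair f g) h) = pair f (pair g h) := by
  apply CoalgHom.coe_linearMap_injective
  change (TensorProduct.assoc R A B D).toLinearMap ∘ₗ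
      TensorProduct.map (TensorProduct.map f.toLinearMap g.toLinearMap ∘ₗ comul) h.toLinearMap ∘ₗ
        comul =
    TensorProduct.map f.toLinearMap (TensorProduct.map g.toLinearMap h.toLinearMap ∘ₗ comul) ∘ₗ
      comul
  simp [coassoc_simps]

lemma assoc_symm_comp_pair_pair (f : C →ₗc[R] A) (g : C →ₗc[R] B) (h : C →ₗc[R] D) :
    ((Coalgebra.TensorProduct.assoc R R A B D).symm :
        A ⊗[R] (B ⊗[R] D) →ₗc[R] (A ⊗[R] B) ⊗[R] D).comp (pair f (pair g h)) =
      pair (pair f g) h := by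
  rw [← assoc_comp_pair_pair]
  ext c
  exact (Coalgebra.TensorProduct.assoc R R A B D).symm_apply_apply _

lemma fst_comp_pair (f : C →ₗc[R] A) (g : C →ₗc[R] B) : (fst R A B).comp (pair f g) = f := by
  apply CoalgHom.coe_linearMap_injective
  change (TensorProduct.rid R A).toLinearMap ∘ₗ TensorProduct.map .id counit ∘ₗ
    TensorProduct.map f.toLinearMap g.toLinearMap ∘ₗ comul = f.toLinearMap
  simp only [coassoc_simps, CoalgHom.counit_comp]
  ext c
  exact congrArg f ((congrArg (TensorProduct.rid R C) (Coalgebra.lTensor_counit_comul c)).trans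
    (one_smul R c))

lemma snd_comp_pair (f : C →ₗc[R] A) (g : C →ₗc[R] B) : (snd R A B).comp (pair f g) = g := by
  apply CoalgHom.coe_linearMap_injective
  change (TensorProduct.lid R B).toLinearMap ∘ₗ TensorProduct.map counit .id ∘ₗ
    TensorProduct.map f.toLinearMap g.toLinearMap ∘ₗ comul = g.toLinearMap
  simp only [coassoc_simps, CoalgHom.counit_comp]
  ext c
  exact congrArg g ((congrArg (TensorProduct.lid R C) (Coalgebra.rTensor_counit_comul c)).trans
    (one_smul R c))

lemma pair_fst_snd [IsCocomm R A] [IsCocomm R B] :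
    pair (fst R A B) (snd R A B) = .id R (A ⊗[R] B) := by
  have counit_inner :
      TensorProduct.map (fst R A B).toLinearMap (snd R A B).toLinearMap ∘ₗ
          (TensorProduct.tensorTensorTensorComm R A A B B).toLinearMap =
        TensorProduct.map ((TensorProduct.rid R A).toLinearMap ∘ₗ counit.lTensor A)
          ((TensorProduct.lid R B).toLinearMap ∘ₗ counit.rTensor B) := by
    ext a₁ a₂ b₁ b₂
    simp [TensorProduct.smul_tmul, smul_smul, mul_comm]
  apply CoalgHom.coe_linearMap_injective
  ext a b
  exact (LinearMap.congr_fun counit_inner (comul a ⊗ₜ comul b)).trans (by simp)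

lemma map_snd_comp_comul {M : Type*} [AddCommMonoid M] [Module R M] (k : A ⊗[R] B →ₗ[R] M) :
    TensorProduct.map (snd R A B).toLinearMap k ∘ₗ comul =
      k.lTensor B ∘ₗ (TensorProduct.leftComm R A B B).toLinearMap ∘ₗ comul.lTensor A := by
  have counit_left :
      TensorProduct.map (snd R A B).toLinearMap k ∘ₗ
          (TensorProduct.tensorTensorTensorComm R A A B B).toLinearMap =
        k.lTensor B ∘ₗ (TensorProduct.leftComm R A B B).toLinearMap ∘ₗ
          ((TensorProduct.lid R A).toLinearMap ∘ₗ counit.rTensor A).rTensor (B ⊗[R] B) := by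
    ext a₁ a₂ b₁ b₂
    simp [TensorProduct.smul_tmul, TensorProduct.tmul_smul]
  ext a b
  exact (LinearMap.congr_fun counit_left (comul a ⊗ₜ comul b)).trans (by simp)

end Pairing

section ConvolutionMonoid

variable {R C D H : Type*} [CommSemiring R]
  [AddCommMonoid C] [Module R C] [Coalgebra R C] [AddCommMonoid D] [Module R D] [Coalgebra R D]
  [Semiring H] [Bialgebra R H]

/-- The convolution unit `c ↦ ε(c) 1`. -/
noncomputable instance : One (WithConv (C →ₗc[R] H)) where
  one := toConv ((Bialgebra.unitBialgHom R H : R →ₗc[R] H).comp (counitCoalgHom R C))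

lemma toLinearMap_convOne :
    toConv (1 : WithConv (C →ₗc[R] H)).ofConv.toLinearMap = 1 := rfl

lemma toConv_toLinearMap_injective :
    Function.Injective fun f : WithConv (C →ₗc[R] H) ↦ toConv f.ofConv.toLinearMap :=
  WithConv.toConv_injective.comp
    (CoalgHom.coe_linearMap_injective.comp WithConv.ofConv_injective)

variable [IsCocomm R C]

/-- Convolution `f * g = μ ∘ (f ⊗ g) ∘ Δ` of coalgebra maps. -/
noncomputable instance : Mul (WithConv (C →ₗc[R] H)) where
  mul f g := toConv ((Bialgebra.mulCoalgHom R H).comp (pair f.ofConv g.ofConv))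

lemma convMul_def (f g : WithConv (C →ₗc[R] H)) :
    f * g = toConv ((Bialgebra.mulCoalgHom R H).comp (pair f.ofConv g.ofConv)) := rfl

lemma toLinearMap_convMul (f g : WithConv (C →ₗc[R] H)) :
    toConv (f * g).ofConv.toLinearMap =
      toConv f.ofConv.toLinearMap * toConv g.ofConv.toLinearMap := rfl

lemma toConv_convMul_comp [IsCocomm R D] (f g : WithConv (C →ₗc[R] H)) (k : D →ₗc[R] C) :
    toConv ((f * g).ofConv.comp k) = toConv (f.ofConv.comp k) * toConv (g.ofConv.comp k) := by
  simp only [convMul_def, WithConv.ofConv_toConv, CoalgHom.comp_assoc, pair_comp]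

end ConvolutionMonoid

section ConvolutionGroup

variable {R C D H : Type*} [CommSemiring R]
  [AddCommMonoid C] [Module R C] [Coalgebra R C] [AddCommMonoid D] [Module R D] [Coalgebra R D]
  [Semiring H] [HopfAlgebra R H]

lemma map_antipode_convMul_id :
    toConv (TensorProduct.map (antipode R) (antipode R)) * toConv .id =
      (1 : WithConv (H ⊗[R] H →ₗ[R] H ⊗[R] H)) := by
  have factorwise :
      toConv (TensorProduct.map (antipode R) (antipode R)) *
          toConv (TensorProduct.map .id .id) =
        toConv (TensorProduct.map (toConv (antipode R) * toConv (.id : H →ₗ[R] H)).ofConv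
          (toConv (antipode R) * toConv (.id : H →ₗ[R] H)).ofConv) :=
    TensorProduct.map_convMul_map (f := toConv (antipode R (A := H))) (h := toConv .id)
      (g := toConv (antipode R (A := H))) (k := toConv .id)
  rw [← TensorProduct.map_id, factorwise, LinearMap.antipode_mul_id]
  ext a b
  simp [Algebra.algebraMap_eq_smul_one, Algebra.TensorProduct.one_def,
    TensorProduct.smul_tmul', TensorProduct.tmul_smul, smul_smul, mul_comm]

variable [IsCocomm R H]

lemma map_antipode_comp_comul_convMul_comul :
    toConv (TensorProduct.map (antipode R) (antipode R) ∘ₗ comul) *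
      toConv (comul : H →ₗ[R] H ⊗[R] H) = 1 := by
  have comp_comul := LinearMap.convMul_comp_coalgHom_distrib
    (toConv (TensorProduct.map (antipode R) (antipode R))) (toConv .id) (comulCoalgHom R H)
  rw [map_antipode_convMul_id] at comp_comul
  refine (congrArg toConv comp_comul).symm.trans ?_
  ext a
  simp

-- Both sides are convolution inverses of `Δ`.
lemma comul_comp_antipode :
    (comul : H →ₗ[R] H ⊗[R] H) ∘ₗ antipode R =
      TensorProduct.map (antipode R) (antipode R) ∘ₗ comul :=
  congrArg WithConv.ofConv <|
    (left_inv_eq_right_inv map_antipode_comp_comul_convMul_comul LinearMap.comul_right_inv).symm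

variable (R H) in
/-- The antipode of a cocommutative Hopf algebra as a coalgebra map. -/
noncomputable def antipodeCoalgHom : H →ₗc[R] H where
  toLinearMap := antipode R
  counit_comp := HopfAlgebra.counit_comp_antipode
  map_comp_comul := comul_comp_antipode.symm

/-- The convolution inverse `S ∘ f` of a coalgebra map `f`. -/
noncomputable instance : Inv (WithConv (C →ₗc[R] H)) where
  inv f := toConv ((antipodeCoalgHom R H).comp f.ofConv)

lemma toLinearMap_convInv_convMul (f : WithConv (C →ₗc[R] H)) :
    toConv (f⁻¹).ofConv.toLinearMap * toConv f.ofConv.toLinearMap = 1 := by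
  have comp_point :=
    LinearMap.convMul_comp_coalgHom_distrib (toConv (antipode R)) (toConv .id) f.ofConv
  rw [LinearMap.antipode_mul_id] at comp_point
  refine (congrArg toConv comp_point).symm.trans ?_
  ext a
  simp

variable [IsCocomm R C]

/-- The group of `C`-valued points of `H`. -/
noncomputable instance : Group (WithConv (C →ₗc[R] H)) :=
  Group.ofLeftAxioms
    (fun f g h ↦ toConv_toLinearMap_injective <| by
      simp only [toLinearMap_convMul, mul_assoc])
    (fun f ↦ toConv_toLinearMap_injective <| by
      simp only [toLinearMap_convMul, toLinearMap_convOne, one_mul])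
    (fun f ↦ toConv_toLinearMap_injective <| by
      simp only [toLinearMap_convMul, toLinearMap_convInv_convMul, toLinearMap_convOne])

variable [IsCocomm R D]

/-- Precomposition with a coalgebra map `k : D → C`, as a homomorphism from the group of
`C`-valued points of `H` to the group of `D`-valued points. -/
noncomputable def precomp (k : D →ₗc[R] C) : WithConv (C →ₗc[R] H) →* WithConv (D →ₗc[R] H) :=
  MonoidHom.mk' (fun f ↦ toConv (f.ofConv.comp k)) fun f g ↦ toConv_convMul_comp f g k

lemma precomp_toConv (f : C →ₗc[R] H) (k : D →ₗc[R] C) :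
    precomp k (toConv f) = toConv (f.comp k) := rfl

lemma ofConv_comp (f : WithConv (C →ₗc[R] H)) (k : D →ₗc[R] C) :
    f.ofConv.comp k = (precomp k f).ofConv := rfl

end ConvolutionGroup

section Braiding

variable {R C H : Type*} [CommSemiring R] [AddCommMonoid C] [Module R C] [Coalgebra R C]
  [IsCocomm R C] [Semiring H] [HopfAlgebra R H] [IsCocomm R H]

variable (R H) in
/-- The coalgebra endomorphism of `H ⊗ H` given by `(f, g) ↦ (g, g⁻¹ f g)` on points. -/
noncomputable def braiding : H ⊗[R] H →ₗc[R] H ⊗[R] H :=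
  pair (snd R H H) ((toConv (snd R H H))⁻¹ * toConv (fst R H H) * toConv (snd R H H)).ofConv

variable (R H) in
/-- The coalgebra endomorphism of `H ⊗ H` given by `(f, g) ↦ (f g f⁻¹, f)` on points; it is the
inverse of `braiding R H`. -/
noncomputable def braidingInv : H ⊗[R] H →ₗc[R] H ⊗[R] H :=
  pair (toConv (fst R H H) * toConv (snd R H H) * (toConv (fst R H H))⁻¹).ofConv (fst R H H)

lemma braiding_comp_pair (f g : WithConv (C →ₗc[R] H)) :
    (braiding R H).comp (pair f.ofConv g.ofConv) = pair g.ofConv (g⁻¹ * f * g).ofConv := by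
  rw [braiding, pair_comp, snd_comp_pair, ofConv_comp]
  simp only [map_mul, map_inv, precomp_toConv, fst_comp_pair, snd_comp_pair,
    WithConv.toConv_ofConv]

lemma braidingInv_comp_pair (f g : WithConv (C →ₗc[R] H)) :
    (braidingInv R H).comp (pair f.ofConv g.ofConv) = pair (f * g * f⁻¹).ofConv f.ofConv := by
  rw [braidingInv, pair_comp, fst_comp_pair, ofConv_comp]
  simp only [map_mul, map_inv, precomp_toConv, fst_comp_pair, snd_comp_pair,
    WithConv.toConv_ofConv]

lemma braiding_comp_braidingInv : (braiding R H).comp (braidingInv R H) = .id R (H ⊗[R] H) :=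
  calc (braiding R H).comp (braidingInv R H)
    _ = pair (toConv (fst R H H)).ofConv (toConv (snd R H H)).ofConv := by
      rw [braidingInv, ← WithConv.ofConv_toConv (fst R H H), braiding_comp_pair]
      group
    _ = .id R (H ⊗[R] H) := pair_fst_snd

lemma braidingInv_comp_braiding : (braidingInv R H).comp (braiding R H) = .id R (H ⊗[R] H) :=
  calc (braidingInv R H).comp (braiding R H)
    _ = pair (toConv (fst R H H)).ofConv (toConv (snd R H H)).ofConv := by
      rw [braiding, ← WithConv.ofConv_toConv (snd R H H), braidingInv_comp_pair]
      group
    _ = .id R (H ⊗[R] H) := pair_fst_snd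

theorem bijective_braiding : Function.Bijective (braiding R H) :=
  Function.bijective_iff_has_inverse.mpr ⟨braidingInv R H,
    DFunLike.congr_fun braidingInv_comp_braiding, DFunLike.congr_fun braiding_comp_braidingInv⟩

variable (R H) in
/-- The braiding acting on the first two factors of `(H ⊗ H) ⊗ H`. -/
noncomputable def braiding₁₂ : (H ⊗[R] H) ⊗[R] H →ₗc[R] (H ⊗[R] H) ⊗[R] H :=
  Coalgebra.TensorProduct.map (braiding R H) (.id R H)

variable (R H) in
/-- The braiding acting on the last two factors of `(H ⊗ H) ⊗ H`. -/
noncomputable def braiding₂₃ : (H ⊗[R] H) ⊗[R] H →ₗc[R] (H ⊗[R] H) ⊗[R] H :=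
  ((Coalgebra.TensorProduct.assoc R R H H H).symm :
      H ⊗[R] (H ⊗[R] H) →ₗc[R] (H ⊗[R] H) ⊗[R] H).comp
    ((Coalgebra.TensorProduct.map (.id R H) (braiding R H)).comp
      (Coalgebra.TensorProduct.assoc R R H H H :
        (H ⊗[R] H) ⊗[R] H →ₗc[R] H ⊗[R] (H ⊗[R] H)))

lemma braiding₁₂_comp_pair (f g h : WithConv (C →ₗc[R] H)) :
    (braiding₁₂ R H).comp (pair (pair f.ofConv g.ofConv) h.ofConv) =
      pair (pair g.ofConv (g⁻¹ * f * g).ofConv) h.ofConv := by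
  rw [braiding₁₂, map_comp_pair, braiding_comp_pair, CoalgHom.id_comp]

lemma braiding₂₃_comp_pair (f g h : WithConv (C →ₗc[R] H)) :
    (braiding₂₃ R H).comp (pair (pair f.ofConv g.ofConv) h.ofConv) =
      pair (pair f.ofConv h.ofConv) (h⁻¹ * g * h).ofConv := by
  rw [braiding₂₃, CoalgHom.comp_assoc, CoalgHom.comp_assoc, assoc_comp_pair_pair, map_comp_pair,
    braiding_comp_pair, CoalgHom.id_comp, assoc_symm_comp_pair_pair]

theorem braiding₁₂_comp_braiding₂₃_comp_braiding₁₂ :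
    (braiding₁₂ R H).comp ((braiding₂₃ R H).comp (braiding₁₂ R H)) =
      (braiding₂₃ R H).comp ((braiding₁₂ R H).comp (braiding₂₃ R H)) := by
  have eq_on_points (f g h : WithConv ((H ⊗[R] H) ⊗[R] H →ₗc[R] H)) :
      ((braiding₁₂ R H).comp ((braiding₂₃ R H).comp (braiding₁₂ R H))).comp
          (pair (pair f.ofConv g.ofConv) h.ofConv) =
        ((braiding₂₃ R H).comp ((braiding₁₂ R H).comp (braiding₂₃ R H))).comp
          (pair (pair f.ofConv g.ofConv) h.ofConv) := by
    simp only [CoalgHom.comp_assoc, braiding₁₂_comp_pair, braiding₂₃_comp_pair]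
    group
  have universal_point :
      pair (pair ((fst R H H).comp (fst R (H ⊗[R] H) H)) ((snd R H H).comp (fst R (H ⊗[R] H) H)))
        (snd R (H ⊗[R] H) H) = .id R ((H ⊗[R] H) ⊗[R] H) := by
    simp only [← pair_comp, pair_fst_snd, CoalgHom.id_comp]
  simpa only [WithConv.ofConv_toConv, universal_point, CoalgHom.comp_id] using
    eq_on_points (toConv ((fst R H H).comp (fst R (H ⊗[R] H) H)))
      (toConv ((snd R H H).comp (fst R (H ⊗[R] H) H))) (toConv (snd R (H ⊗[R] H) H))

end Braiding

section AdjointBraiding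

variable {R V H : Type*} [CommSemiring R] [AddCommMonoid V] [Module R V]
  [Semiring H] [HopfAlgebra R H]

/-- The Yang–Baxter equation `σ₁₂ σ₂₃ σ₁₂ = σ₂₃ σ₁₂ σ₂₃` for an endomorphism `σ` of `V ⊗ V`, stated
on `(V ⊗ V) ⊗ V`. -/
def IsYangBaxter (σ : V ⊗[R] V →ₗ[R] V ⊗[R] V) : Prop :=
  let σ₁₂ := σ.rTensor V
  let σ₂₃ := (TensorProduct.assoc R V V V).symm.toLinearMap ∘ₗ σ.lTensor V ∘ₗ
    (TensorProduct.assoc R V V V).toLinearMap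
  σ₁₂ ∘ₗ σ₂₃ ∘ₗ σ₁₂ = σ₂₃ ∘ₗ σ₁₂ ∘ₗ σ₂₃

variable (R V) in
/-- The permutation `x ⊗ ((y₁ ⊗ y₂) ⊗ y₃) ↦ y₁ ⊗ ((y₂ ⊗ x) ⊗ y₃)` of tensor factors. -/
noncomputable def adjointPermutation :
    V ⊗[R] ((V ⊗[R] V) ⊗[R] V) ≃ₗ[R] V ⊗[R] ((V ⊗[R] V) ⊗[R] V) :=
  (TensorProduct.congr (.refl R V) (TensorProduct.assoc R V V V)).trans <|
    (TensorProduct.assoc R V V (V ⊗[R] V)).symm.trans <|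
      (TensorProduct.congr (TensorProduct.comm R V V) (.refl R (V ⊗[R] V))).trans <|
        (TensorProduct.assoc R V V (V ⊗[R] V)).trans <|
          (TensorProduct.congr (.refl R V) (TensorProduct.assoc R V V V).symm).trans <|
            TensorProduct.congr (.refl R V)
              (TensorProduct.congr (TensorProduct.comm R V V) (.refl R V))

variable (R H) in
/-- The map `σ(x ⊗ y) = y₍₁₎ ⊗ S(y₍₂₎) x y₍₃₎`, composed of structure maps of `H`. -/
noncomputable def adjointBraiding : H ⊗[R] H →ₗ[R] H ⊗[R] H :=
  (LinearMap.mul' R H ∘ₗ (LinearMap.mul' R H).rTensor H).lTensor H ∘ₗ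
    (((antipode R).rTensor H).rTensor H).lTensor H ∘ₗ
      (adjointPermutation R H).toLinearMap ∘ₗ (comul.rTensor H ∘ₗ comul).lTensor H

variable (R H) in
/-- The map `x ⊗ (y ⊗ z) ↦ S(y) x z`; its composite with `id ⊗ Δ` is the right adjoint action. -/
noncomputable def antipodeSandwich : H ⊗[R] (H ⊗[R] H) →ₗ[R] H :=
  LinearMap.mul' R H ∘ₗ TensorProduct.map (antipode R) (LinearMap.mul' R H) ∘ₗ
    (TensorProduct.leftComm R H H H).toLinearMap

lemma lTensor_antipodeSandwich_comp_leftComm_comp_assoc :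
    (antipodeSandwich R H).lTensor H ∘ₗ (TensorProduct.leftComm R H H (H ⊗[R] H)).toLinearMap ∘ₗ
        (TensorProduct.assoc R H H H).toLinearMap.lTensor H =
      (LinearMap.mul' R H ∘ₗ (LinearMap.mul' R H).rTensor H).lTensor H ∘ₗ
        (((antipode R).rTensor H).rTensor H).lTensor H ∘ₗ
          (adjointPermutation R H).toLinearMap := by
  ext x y₁ y₂ y₃
  simp [antipodeSandwich, adjointPermutation, mul_assoc]

lemma lTensor_antipodeSandwich_comp_leftComm_comp_comul :
    (antipodeSandwich R H ∘ₗ comul.lTensor H).lTensor H ∘ₗ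
        (TensorProduct.leftComm R H H H).toLinearMap ∘ₗ comul.lTensor H =
      adjointBraiding R H := by
  have leftComm_naturality :
      (comul.lTensor H).lTensor H ∘ₗ (TensorProduct.leftComm R H H H).toLinearMap =
        (TensorProduct.leftComm R H H (H ⊗[R] H)).toLinearMap ∘ₗ
          ((comul : H →ₗ[R] H ⊗[R] H).lTensor H).lTensor H := by
    ext x y z
    simp
  calc (antipodeSandwich R H ∘ₗ comul.lTensor H).lTensor H ∘ₗ
        (TensorProduct.leftComm R H H H).toLinearMap ∘ₗ comul.lTensor H
    _ = (antipodeSandwich R H).lTensor H ∘ₗ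
        ((comul.lTensor H).lTensor H ∘ₗ (TensorProduct.leftComm R H H H).toLinearMap) ∘ₗ
          comul.lTensor H := by
      rw [LinearMap.lTensor_comp, LinearMap.comp_assoc, LinearMap.comp_assoc]
    _ = (antipodeSandwich R H).lTensor H ∘ₗ
        (TensorProduct.leftComm R H H (H ⊗[R] H)).toLinearMap ∘ₗ
          (comul.lTensor H ∘ₗ comul).lTensor H := by
      rw [leftComm_naturality, LinearMap.comp_assoc, ← LinearMap.lTensor_comp]
    _ = ((antipodeSandwich R H).lTensor H ∘ₗ
        (TensorProduct.leftComm R H H (H ⊗[R] H)).toLinearMap ∘ₗ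
          (TensorProduct.assoc R H H H).toLinearMap.lTensor H) ∘ₗ
            (comul.rTensor H ∘ₗ comul).lTensor H := by
      rw [← Coalgebra.coassoc, LinearMap.lTensor_comp H (TensorProduct.assoc R H H H).toLinearMap,
        LinearMap.comp_assoc, LinearMap.comp_assoc]
    _ = adjointBraiding R H := by
      rw [lTensor_antipodeSandwich_comp_leftComm_comp_assoc, adjointBraiding,
        LinearMap.comp_assoc, LinearMap.comp_assoc]

variable [IsCocomm R H]

lemma toLinearMap_conj_fst_snd :
    ((toConv (snd R H H))⁻¹ * toConv (fst R H H) * toConv (snd R H H)).ofConv.toLinearMap =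
      antipodeSandwich R H ∘ₗ comul.lTensor H := by
  have fst_mul_snd :
      toConv (fst R H H) * toConv (snd R H H) = toConv (Bialgebra.mulCoalgHom R H) := by
    rw [convMul_def, WithConv.ofConv_toConv, WithConv.ofConv_toConv, pair_fst_snd,
      CoalgHom.comp_id]
  rw [mul_assoc, fst_mul_snd]
  calc LinearMap.mul' R H ∘ₗ TensorProduct.map (antipode R ∘ₗ (snd R H H).toLinearMap)
        (LinearMap.mul' R H) ∘ₗ comul
    _ = LinearMap.mul' R H ∘ₗ (antipode R).rTensor H ∘ₗ
        TensorProduct.map (snd R H H).toLinearMap (LinearMap.mul' R H) ∘ₗ comul := by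
      rw [← LinearMap.rTensor_comp_map, LinearMap.comp_assoc]
    _ = antipodeSandwich R H ∘ₗ comul.lTensor H := by
      rw [map_snd_comp_comul, antipodeSandwich, ← LinearMap.rTensor_comp_lTensor]
      simp only [LinearMap.comp_assoc]

theorem toLinearMap_braiding : (braiding R H).toLinearMap = adjointBraiding R H :=
  calc (braiding R H).toLinearMap
    _ = TensorProduct.map (snd R H H).toLinearMap
        ((toConv (snd R H H))⁻¹ * toConv (fst R H H) * toConv (snd R H H)).ofConv.toLinearMap ∘ₗ
          comul := pair_toLinearMap _ _
    _ = (antipodeSandwich R H ∘ₗ comul.lTensor H).lTensor H ∘ₗ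
        (TensorProduct.leftComm R H H H).toLinearMap ∘ₗ comul.lTensor H := by
      rw [map_snd_comp_comul, toLinearMap_conj_fst_snd]
    _ = adjointBraiding R H := lTensor_antipodeSandwich_comp_leftComm_comp_comul

theorem isYangBaxter_adjointBraiding : IsYangBaxter (adjointBraiding R H) := by
  rw [← toLinearMap_braiding]
  exact congrArg CoalgHom.toLinearMap braiding₁₂_comp_braiding₂₃_comp_braiding₁₂

theorem bijective_adjointBraiding : Function.Bijective (adjointBraiding R H) := by
  rw [← toLinearMap_braiding]
  exact bijective_braiding

end AdjointBraiding

end CocommHopf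

open CocommHopf in
theorem stmt18_general {R H : Type*} [CommSemiring R] [Semiring H] [HopfAlgebra R H]
    [Coalgebra.IsCocomm R H] :
    IsYangBaxter (adjointBraiding R H) ∧ Function.Bijective (adjointBraiding R H) :=
  ⟨isYangBaxter_adjointBraiding, bijective_adjointBraiding⟩

/-- For a cocommutative Hopf algebra `H` over `R` with bijective antipode
`S`, the linear map `σ : H ⊗ H → H ⊗ H`, `x ⊗ y ↦ y₍₁₎ ⊗ S(y₍₂₎)·x·y₍₃₎` (written as a
composite of structure maps) satisfies the Yang–Baxter equation and is a linear
automorphism of `H ⊗ H`. -/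
theorem stmt18 {R : Type*} [CommRing R] {H : Type*} [Ring H] [HopfAlgebra R H]
    (hcocomm : (TensorProduct.comm R H H).toLinearMap ∘ₗ
        (Coalgebra.comul (R := R) (A := H)) = Coalgebra.comul)
    (hS : Function.Bijective (HopfAlgebra.antipode (R := R) (A := H))) :
    (let Δ : H →ₗ[R] H ⊗[R] H := Coalgebra.comul
     let μ : H ⊗[R] H →ₗ[R] H := LinearMap.mul' R H
     let S : H →ₗ[R] H := HopfAlgebra.antipode (R := R) (A := H)
     -- the permutation `x ⊗ ((y₁ ⊗ y₂) ⊗ y₃) ↦ y₁ ⊗ ((y₂ ⊗ x) ⊗ y₃)`: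
     let P : (H ⊗[R] ((H ⊗[R] H) ⊗[R] H)) ≃ₗ[R] (H ⊗[R] ((H ⊗[R] H) ⊗[R] H)) :=
       (TensorProduct.congr (LinearEquiv.refl R H) (TensorProduct.assoc R H H H)).trans <|
        ((TensorProduct.assoc R H H (H ⊗[R] H)).symm).trans <|
         (TensorProduct.congr (TensorProduct.comm R H H)
            (LinearEquiv.refl R (H ⊗[R] H))).trans <|
          (TensorProduct.assoc R H H (H ⊗[R] H)).trans <|
           (TensorProduct.congr (LinearEquiv.refl R H)
              (TensorProduct.assoc R H H H).symm).trans <|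
            TensorProduct.congr (LinearEquiv.refl R H)
              (TensorProduct.congr (TensorProduct.comm R H H) (LinearEquiv.refl R H))
     let σ : H ⊗[R] H →ₗ[R] H ⊗[R] H :=
       (LinearMap.lTensor H (μ ∘ₗ LinearMap.rTensor H μ)) ∘ₗ
         (LinearMap.lTensor H (LinearMap.rTensor H (LinearMap.rTensor H S))) ∘ₗ
           P.toLinearMap ∘ₗ (LinearMap.lTensor H ((LinearMap.rTensor H Δ) ∘ₗ Δ))
     ((LinearMap.rTensor H σ) ∘ₗ
          ((TensorProduct.assoc R H H H).symm.toLinearMap ∘ₗ LinearMap.lTensor H σ ∘ₗ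
            (TensorProduct.assoc R H H H).toLinearMap) ∘ₗ (LinearMap.rTensor H σ) =
        ((TensorProduct.assoc R H H H).symm.toLinearMap ∘ₗ LinearMap.lTensor H σ ∘ₗ
            (TensorProduct.assoc R H H H).toLinearMap) ∘ₗ (LinearMap.rTensor H σ) ∘ₗ
          ((TensorProduct.assoc R H H H).symm.toLinearMap ∘ₗ LinearMap.lTensor H σ ∘ₗ
            (TensorProduct.assoc R H H H).toLinearMap)) ∧
       Function.Bijective σ) := by
  have : Coalgebra.IsCocomm R H := ⟨hcocomm⟩
  exact stmt18_general
end

section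
/- Let (S,◁) be a shelf. For n ≥ 1 and 1 ≤ i ≤ n define maps d_i, d'_i : S^n → S^{n−1} by d_i(a_1,…,a_n) = (a_1◁a_i, …, a_{i−1}◁a_i, a_{i+1}, …, a_n) and d'_i(a_1,…,a_n) = (a_1, …, a_{i−1}, a_{i+1}, …, a_n). Then these maps form a pre-bisimplicial structure: for all 1 ≤ i < j ≤ n one has d_i ∘ d_j = d_{j−1} ∘ d_i, d'_i ∘ d'_j = d'_{j−1} ∘ d'_i, d_i ∘ d'_j = d'_{j−1} ∘ d_i, and d'_i ∘ d_j = d_{j−1} ∘ d'_i. Consequently, for any commutative ring R, the R-linear maps ∂_n : R[S^n] → R[S^{n−1}] defined on basis elements by ∂_n = Σ_{i=1}^n (−1)^{i−1}(d_i − d'_i) satisfy ∂_{n−1} ∘ ∂_n = 0. -/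
/-- The face map `d_i(a_1,…,a_n) = (a_1◁a_i, …, a_{i−1}◁a_i, a_{i+1}, …, a_n)`
(here written 0-indexed on `S^{n+1} → S^n`). -/
def dmap {S : Type*} (op : S → S → S) {n : ℕ} (i : Fin (n + 1)) (a : Fin (n + 1) → S) :
    Fin n → S :=
  fun j => if (j : ℕ) < (i : ℕ) then op (a j.castSucc) (a i) else a j.succ

/-- The face map `d'_i(a_1,…,a_n) = (a_1, …, a_{i−1}, a_{i+1}, …, a_n)`. -/
def d'map {S : Type*} {n : ℕ} (i : Fin (n + 1)) (a : Fin (n + 1) → S) : Fin n → S :=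
  fun j => if (j : ℕ) < (i : ℕ) then a j.castSucc else a j.succ

/-- The total differential `∂ = Σ_i (−1)^{i−1}(d_i − d'_i)` on the free `R`-module
`R[S^n]` (0-indexed, so the sign is `(−1)^i`). -/
noncomputable def rackDiff (R : Type*) [CommRing R] {S : Type*} (op : S → S → S) (n : ℕ) :
    ((Fin (n + 1) → S) →₀ R) →ₗ[R] ((Fin n → S) →₀ R) :=
  ∑ i : Fin (n + 1), ((-1 : R) ^ (i : ℕ)) •
    (Finsupp.lmapDomain R R (dmap op i) - Finsupp.lmapDomain R R (d'map i))

/-!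
Deleting an entry is the face map of the trivial operation `a ◁ b = a`, and this operation and `◁`
distribute over each other. All four families of face identities are therefore instances of one
identity, for the face maps of two operations of which the second distributes over the first.
Linear combinations of mutually distributive face maps are again presimplicial, so their
alternating sum squares to zero by pairing the composite indexed by `(i, j + 1)` with the one
indexed by `(j, i)`, for `i ≤ j`.
-/

lemma sum_smul_comp_sum_smul {R M N P ι κ : Type*} [CommSemiring R] [AddCommMonoid M]
    [AddCommMonoid N] [AddCommMonoid P] [Module R M] [Module R N] [Module R P] [Fintype ι]
    [Fintype κ] (a : ι → R) (b : κ → R) (f : ι → N →ₗ[R] P) (g : κ → M →ₗ[R] N) :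
    (∑ i, a i • f i) ∘ₗ (∑ j, b j • g j) = ∑ j, ∑ i, (a i * b j) • (f i ∘ₗ g j) := by
  ext x
  simp only [LinearMap.comp_apply, LinearMap.sum_apply, LinearMap.smul_apply, map_sum, map_smul,
    Finset.smul_sum, smul_smul, mul_comm]

lemma alternatingSum_comp_alternatingSum_eq_zero {R M N P : Type*} [CommRing R]
    [AddCommGroup M] [AddCommGroup N] [AddCommGroup P] [Module R M] [Module R N] [Module R P]
    {n : ℕ} (d : Fin (n + 1) → N →ₗ[R] P) (e : Fin (n + 2) → M →ₗ[R] N)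
    (hde : ∀ i j : Fin (n + 1), i ≤ j → d i ∘ₗ e j.succ = d j ∘ₗ e i.castSucc) :
    (∑ i : Fin (n + 1), (-1 : R) ^ (i : ℕ) • d i) ∘ₗ
      (∑ j : Fin (n + 2), (-1 : R) ^ (j : ℕ) • e j) = 0 := by
  rw [sum_smul_comp_sum_smul, Fin.sum_sum_eq_sum_triangle_add]
  refine Finset.sum_eq_zero fun i _ => Finset.sum_eq_zero fun j hij => ?_
  have sign : (-1 : R) ^ (i : ℕ) * (-1) ^ (j.succ : ℕ) =
      -((-1) ^ (j : ℕ) * (-1) ^ (i.castSucc : ℕ)) := by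
    rw [Fin.val_succ, Fin.val_castSucc]
    ring
  rw [hde i j (Finset.mem_Ici.mp hij), sign, neg_smul, add_neg_cancel]

lemma dmap_comp_dmap_succ {S : Type*} {op₁ op₂ : S → S → S}
    (hop : ∀ a b c, op₂ (op₁ a b) c = op₁ (op₂ a c) (op₂ b c))
    {n : ℕ} {i j : Fin (n + 1)} (hij : i ≤ j) :
    dmap op₁ i ∘ dmap op₂ j.succ = dmap op₂ j ∘ dmap op₁ i.castSucc := by
  funext a k
  simp only [Function.comp_apply, dmap, Fin.val_castSucc, Fin.val_succ]
  have hij' : (i : ℕ) ≤ j := hij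
  rcases lt_or_ge (k : ℕ) i with hki | hik
  · have hkj : (k : ℕ) < j := hki.trans_le hij'
    simp [hki, hkj, Nat.lt_succ_of_lt hkj, Nat.lt_succ_of_le hij', hij'.not_gt, hop]
  · simp [hik.not_gt, (Nat.le_succ_of_le hik).not_gt, hij'.not_gt]

lemma d'map_eq_dmap_const {S : Type*} {n : ℕ} (i : Fin (n + 1)) :
    d'map (S := S) i = dmap (Function.const S) i :=
  rfl

section Multishelf

variable {ι S : Type*}

/-- A multishelf: a family of binary operations on `S`, each of which is right distributive over
every member of the family, itself included. The face maps of
any two members satisfy the presimplicial identities with each other. -/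
def IsMultishelf (op : ι → S → S → S) : Prop :=
  ∀ s t a b c, op t (op s a b) c = op s (op t a c) (op t b c)

lemma isMultishelf_pair_const {op : S → S → S}
    (hsd : ∀ a b c : S, op (op a b) c = op (op a c) (op b c)) :
    IsMultishelf ![op, Function.const S] := by
  simp [IsMultishelf, Fin.forall_fin_two, ← hsd]

variable {R : Type*} [CommRing R] [Fintype ι]

/-- The `i`-th face map of a family of operations with weights `c`: the linear combination
`∑ s, c s • dₛ,ᵢ` of the `i`-th face maps of its members, on free modules. -/
noncomputable def multitermFace (c : ι → R) (op : ι → S → S → S) {n : ℕ} (i : Fin (n + 1)) :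
    ((Fin (n + 1) → S) →₀ R) →ₗ[R] ((Fin n → S) →₀ R) :=
  ∑ s, c s • Finsupp.lmapDomain R R (dmap (op s) i)

/-- The differential of multi-term distributive homology: the alternating sum of the weighted
face maps of a family of operations. The differential `rackDiff` has the weights `1` for `◁` and
`-1` for the trivial operation. -/
noncomputable def multitermDiff (c : ι → R) (op : ι → S → S → S) (n : ℕ) :
    ((Fin (n + 1) → S) →₀ R) →ₗ[R] ((Fin n → S) →₀ R) :=
  ∑ i : Fin (n + 1), (-1 : R) ^ (i : ℕ) • multitermFace c op i

lemma multitermFace_comp_multitermFace (c : ι → R) (op : ι → S → S → S) {n : ℕ}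
    (i : Fin (n + 1)) (j : Fin (n + 2)) :
    multitermFace c op i ∘ₗ multitermFace c op j =
      ∑ t, ∑ s, (c s * c t) • Finsupp.lmapDomain R R (dmap (op s) i ∘ dmap (op t) j) := by
  simp only [multitermFace, sum_smul_comp_sum_smul, Finsupp.lmapDomain_comp]

lemma IsMultishelf.multitermFace_comp_multitermFace_succ {op : ι → S → S → S}
    (hop : IsMultishelf op) (c : ι → R) {n : ℕ} {i j : Fin (n + 1)} (hij : i ≤ j) :
    multitermFace c op i ∘ₗ multitermFace c op j.succ =
      multitermFace c op j ∘ₗ multitermFace c op i.castSucc := by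
  rw [multitermFace_comp_multitermFace, multitermFace_comp_multitermFace, Finset.sum_comm]
  refine Finset.sum_congr rfl fun s _ => Finset.sum_congr rfl fun t _ => ?_
  rw [mul_comm, dmap_comp_dmap_succ (hop s t) hij]

lemma IsMultishelf.multitermDiff_comp_multitermDiff {op : ι → S → S → S}
    (hop : IsMultishelf op) (c : ι → R) (n : ℕ) :
    multitermDiff c op n ∘ₗ multitermDiff c op (n + 1) = 0 :=
  alternatingSum_comp_alternatingSum_eq_zero _ _ fun _ _ hij =>
    hop.multitermFace_comp_multitermFace_succ c hij

lemma rackDiff_eq_multitermDiff (op : S → S → S) (n : ℕ) :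
    rackDiff R op n = multitermDiff ![1, -1] ![op, Function.const S] n := by
  refine Finset.sum_congr rfl fun i _ => congrArg _ (LinearMap.ext fun x => ?_)
  simp [multitermFace, d'map_eq_dmap_const, sub_eq_add_neg]

end Multishelf

theorem stmt19_general {ι S : Type*} [Fintype ι] {op : ι → S → S → S} (hop : IsMultishelf op) :
    (∀ (n : ℕ) (i : Fin (n + 1)) (j : Fin (n + 2)) (hij : i.castSucc < j) (s t : ι),
      dmap (op s) i ∘ dmap (op t) j =
        dmap (op t) (j.pred (Fin.ne_zero_of_lt hij)) ∘ dmap (op s) i.castSucc) ∧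
    (∀ (R : Type*) [CommRing R] (c : ι → R) (n : ℕ),
      multitermDiff c op n ∘ₗ multitermDiff c op (n + 1) = 0) := by
  refine ⟨fun n i j hij s t => ?_, fun R _ c n => hop.multitermDiff_comp_multitermDiff c n⟩
  conv_lhs => rw [← Fin.succ_pred j (Fin.ne_zero_of_lt hij)]
  exact dmap_comp_dmap_succ (hop s t) ((Fin.le_pred_iff _).mpr hij)

/-- For a shelf `(S,◁)`, the maps `d_i`, `d'_i` form a pre-bisimplicial
structure (for `i < j`: `d_i∘d_j = d_{j−1}∘d_i`, `d'_i∘d'_j = d'_{j−1}∘d'_i`,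
`d_i∘d'_j = d'_{j−1}∘d_i`, `d'_i∘d_j = d_{j−1}∘d'_i`), and consequently for any
commutative ring `R` the induced linear maps `∂` satisfy `∂ ∘ ∂ = 0`. -/
theorem stmt19 {S : Type*} (op : S → S → S)
    (hsd : ∀ a b c : S, op (op a b) c = op (op a c) (op b c)) :
    (∀ (n : ℕ) (i : Fin (n + 1)) (j : Fin (n + 2)), (i : ℕ) < (j : ℕ) →
      (dmap op i ∘ dmap op j =
        dmap op ⟨(j : ℕ) - 1, by have := j.isLt; omega⟩ ∘ dmap op i.castSucc) ∧
      (d'map (S := S) i ∘ d'map j =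
        d'map ⟨(j : ℕ) - 1, by have := j.isLt; omega⟩ ∘ d'map i.castSucc) ∧
      (dmap op i ∘ d'map j =
        d'map ⟨(j : ℕ) - 1, by have := j.isLt; omega⟩ ∘ dmap op i.castSucc) ∧
      (d'map i ∘ dmap op j =
        dmap op ⟨(j : ℕ) - 1, by have := j.isLt; omega⟩ ∘ d'map i.castSucc)) ∧
    (∀ (R : Type) (_ : CommRing R) (n : ℕ),
      rackDiff R op n ∘ₗ rackDiff R op (n + 1) = 0) := by
  obtain ⟨faces, diff⟩ := stmt19_general (isMultishelf_pair_const hsd)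
  refine ⟨fun n i j hij => ?_, fun R _ n => ?_⟩
  · exact ⟨faces n i j hij 0 0, faces n i j hij 1 1, faces n i j hij 0 1, faces n i j hij 1 0⟩
  · simpa only [rackDiff_eq_multitermDiff] using diff R _ n
end
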